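/- arXiv:2006.15043 — 2 statements merged into one kernel-verified Lean document; each statement's English description precedes it below -/
import Mathlib

section
/- Let X be a random vector in ℝ^D whose restriction to the ℓ∞-ball B(x,τ_0) has a Lebesgue density f_X satisfying |f_X(z) − f_X(x)| ≤ L‖z − x‖_∞ for all z ∈ B(x,τ_0). For 0 < τ ≤ τ_0, define μ(τ) = E[(X − x) 1_{B(x,τ)}(X)] ∈ ℝ^D. Then for every coordinate j ∈ {1,…,D}: |μ_j(τ)| ≤ (L/8) (2τ)^{2+D}. -/
open MeasureTheory

/-!
Only the positive part `g = max f 0` of `f` acts as a density near `x`, and it inherits the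
Lipschitz bound at `x`. Hence `μ_j(τ)` is the integral of `g z * (z j - x j)` over `B(x, τ)`. By
symmetry `z j - x j` integrates to zero there, so `g z` may be replaced by `g z - g x`, which is at
most `L τ` in absolute value. Fubini gives `(2τ)^(D-1) τ²` for the integral of `|z j - x j|`, and
`L τ · (2τ)^(D-1) τ² = (L/8) (2τ)^(D+2)`.
-/

section Density

variable {α Ω E : Type*} [MeasurableSpace α] [MeasurableSpace Ω]
  [NormedAddCommGroup E] [NormedSpace ℝ E]

lemma restrict_eq_withDensity_of_subset {μ ν : Measure α} {s t : Set α} {ρ : α → ENNReal}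
    (hρ : μ.restrict t = (ν.restrict t).withDensity ρ) (hs : MeasurableSet s) (hst : s ⊆ t) :
    μ.restrict s = (ν.restrict s).withDensity ρ := by
  rw [← Measure.restrict_restrict_of_subset hst, hρ, restrict_withDensity hs,
    Measure.restrict_restrict_of_subset hst]

lemma integral_indicator_comp_eq_setIntegral_smul {P : Measure Ω} {ν : Measure α} {X : Ω → α}
    {s : Set α} {f : α → ℝ} {φ : α → E} (hX : AEMeasurable X P) (hs : MeasurableSet s)
    (hf : AEMeasurable f (ν.restrict s))
    (hφ : AEStronglyMeasurable φ ((P.map X).restrict s))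
    (hdens : (P.map X).restrict s =
      (ν.restrict s).withDensity fun z => ENNReal.ofReal (f z)) :
    ∫ ω, s.indicator φ (X ω) ∂P = ∫ z in s, max (f z) 0 • φ z ∂ν := by
  rw [← integral_map hX ((aestronglyMeasurable_indicator_iff hs).2 hφ), integral_indicator hs,
    hdens, integral_withDensity_eq_integral_toReal_smul₀ hf.ennreal_ofReal (by simp)]
  simp only [ENNReal.toReal_ofReal']

lemma norm_integral_smul_le_of_integral_eq_zero {ν : Measure α} {g : α → ℝ} {w : α → E} {c K : ℝ}
    (hw : Integrable w ν) (hw_zero : ∫ a, w a ∂ν = 0) (hg : ∀ᵐ a ∂ν, |g a - c| ≤ K) :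
    ‖∫ a, g a • w a ∂ν‖ ≤ K * ∫ a, ‖w a‖ ∂ν := by
  have hbound : ∀ᵐ a ∂ν, ‖(g a - c) • w a‖ ≤ K * ‖w a‖ := by
    filter_upwards [hg] with a ha
    rw [norm_smul, Real.norm_eq_abs]
    gcongr
  rw [← integral_const_mul]
  by_cases hgw : Integrable (fun a => g a • w a) ν
  · have hcenter : ∫ a, g a • w a ∂ν = ∫ a, (g a - c) • w a ∂ν := by
      simp only [sub_smul]
      rw [integral_sub hgw (hw.fun_smul c), integral_smul, hw_zero, smul_zero, sub_zero]
    rw [hcenter]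
    exact norm_integral_le_of_norm_le (hw.norm.const_mul K) hbound
  · rw [integral_undef hgw, norm_zero]
    exact integral_nonneg_of_ae (hbound.mono fun a ha => (norm_nonneg _).trans ha)

end Density

lemma intervalIntegral_abs_neg_self {τ : ℝ} (hτ : 0 ≤ τ) : ∫ t in (-τ)..τ, |t| = τ ^ 2 := by
  have hint (a b : ℝ) : IntervalIntegrable (fun t : ℝ => |t|) volume a b :=
    continuous_abs.intervalIntegrable a b
  have hright : ∫ t in (0 : ℝ)..τ, |t| = τ ^ 2 / 2 := by
    rw [intervalIntegral.integral_congr (g := fun t => t), integral_id]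
    · ring
    · intro t ht
      rw [Set.uIcc_of_le hτ] at ht
      exact abs_of_nonneg ht.1
  have hleft : ∫ t in (-τ)..0, |t| = ∫ t in (0 : ℝ)..τ, |t| := by
    simpa using intervalIntegral.integral_comp_neg (a := -τ) (b := 0) fun t : ℝ => |t|
  rw [← intervalIntegral.integral_add_adjacent_intervals (hint (-τ) 0) (hint 0 τ), hleft, hright]
  ring

section SupNormBall

variable {ι : Type*} [Fintype ι] (x : ι → ℝ) {τ : ℝ}

lemma map_eval_restrict_closedBall (hτ : 0 ≤ τ) (j : ι) :
    ((volume : Measure (ι → ℝ)).restrict (Metric.closedBall x τ)).map (Function.eval j) =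
      ENNReal.ofReal (2 * τ) ^ (Fintype.card ι - 1) •
        (volume : Measure ℝ).restrict (Metric.closedBall (x j) τ) := by
  classical
  rw [closedBall_pi x hτ, volume_pi, Measure.restrict_pi_pi, Measure.pi_map_eval]
  simp only [Measure.restrict_apply_univ, Real.volume_closedBall, Finset.prod_const,
    Finset.card_erase_of_mem (Finset.mem_univ j), Finset.card_univ]

lemma setIntegral_closedBall_comp_eval_sub {E : Type*} [NormedAddCommGroup E] [NormedSpace ℝ E]
    (hτ : 0 ≤ τ) (j : ι) {φ : ℝ → E} (hφ : StronglyMeasurable φ) :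
    ∫ z in Metric.closedBall x τ, φ (z j - x j) =
      (2 * τ) ^ (Fintype.card ι - 1) • ∫ t in (-τ)..τ, φ t := by
  have htranslate : ∫ t in Metric.closedBall (x j) τ, φ (t - x j) = ∫ t in (-τ)..τ, φ t := by
    rw [Real.closedBall_eq_Icc, integral_Icc_eq_integral_Ioc,
      ← intervalIntegral.integral_of_le (by linarith), intervalIntegral.integral_comp_sub_right]
    simp
  have hmeas : StronglyMeasurable fun t => φ (t - x j) :=
    hφ.comp_measurable (measurable_id.sub_const (x j))
  calc ∫ z in Metric.closedBall x τ, φ (z j - x j)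
      = ∫ t, φ (t - x j)
          ∂((volume.restrict (Metric.closedBall x τ)).map (Function.eval j)) := by
        rw [integral_map (measurable_pi_apply j).aemeasurable hmeas.aestronglyMeasurable]
    _ = (2 * τ) ^ (Fintype.card ι - 1) • ∫ t in (-τ)..τ, φ t := by
        rw [map_eval_restrict_closedBall x hτ, integral_smul_measure, htranslate,
          ENNReal.toReal_pow, ENNReal.toReal_ofReal (by positivity)]

lemma setIntegral_closedBall_eval_sub (hτ : 0 ≤ τ) (j : ι) :
    ∫ z in Metric.closedBall x τ, (z j - x j) = 0 := by
  simpa using setIntegral_closedBall_comp_eval_sub x hτ j stronglyMeasurable_id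

lemma setIntegral_closedBall_abs_eval_sub (hτ : 0 ≤ τ) (j : ι) :
    ∫ z in Metric.closedBall x τ, |z j - x j| = (2 * τ) ^ (Fintype.card ι - 1) * τ ^ 2 := by
  rw [setIntegral_closedBall_comp_eval_sub x hτ j continuous_abs.stronglyMeasurable,
    intervalIntegral_abs_neg_self hτ, smul_eq_mul]

lemma abs_setIntegral_closedBall_mul_eval_sub_le {L : ℝ} (hL : 0 ≤ L) {g : (ι → ℝ) → ℝ}
    (hg : ∀ z ∈ Metric.closedBall x τ, |g z - g x| ≤ L * ‖z - x‖) (hτ : 0 ≤ τ) (j : ι) :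
    |∫ z in Metric.closedBall x τ, g z * (z j - x j)| ≤
      L / 8 * (2 * τ) ^ (2 + Fintype.card ι) := by
  have hcoord : IntegrableOn (fun z : ι → ℝ => z j - x j) (Metric.closedBall x τ) :=
    (by fun_prop : Continuous fun z : ι → ℝ => z j - x j).continuousOn.integrableOn_compact
      (isCompact_closedBall x τ)
  have hosc : ∀ᵐ z ∂volume.restrict (Metric.closedBall x τ), |g z - g x| ≤ L * τ := by
    filter_upwards [ae_restrict_mem measurableSet_closedBall] with z hz
    calc |g z - g x| ≤ L * ‖z - x‖ := hg z hz
      _ ≤ L * τ := by gcongr; exact mem_closedBall_iff_norm.1 hz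
  obtain ⟨n, hn⟩ : ∃ n, Fintype.card ι = n + 1 :=
    Nat.exists_eq_add_one.2 (Fintype.card_pos_iff.2 ⟨j⟩)
  calc |∫ z in Metric.closedBall x τ, g z * (z j - x j)|
      ≤ L * τ * ∫ z in Metric.closedBall x τ, |z j - x j| :=
        norm_integral_smul_le_of_integral_eq_zero hcoord
          (setIntegral_closedBall_eval_sub x hτ j) hosc
    _ = L * τ * ((2 * τ) ^ (Fintype.card ι - 1) * τ ^ 2) := by
        rw [setIntegral_closedBall_abs_eval_sub x hτ j]
    _ = L / 8 * (2 * τ) ^ (2 + Fintype.card ι) := by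
        rw [hn, Nat.add_sub_cancel]
        ring

end SupNormBall

theorem stmt_17_general {Ω ι : Type*} [MeasurableSpace Ω] [Fintype ι] {P : Measure Ω}
    {x : ι → ℝ} {X : Ω → ι → ℝ} (hX : AEMeasurable X P) {τ0 L : ℝ} {f : (ι → ℝ) → ℝ}
    (hf : AEMeasurable f (volume.restrict (Metric.closedBall x τ0))) (hL : 0 ≤ L)
    (hdens : (P.map X).restrict (Metric.closedBall x τ0) =
      ((volume : Measure (ι → ℝ)).restrict (Metric.closedBall x τ0)).withDensity
        fun z => ENNReal.ofReal (f z))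
    (hLip : ∀ z ∈ Metric.closedBall x τ0, |f z - f x| ≤ L * ‖z - x‖)
    {τ : ℝ} (hτ : 0 ≤ τ) (hττ0 : τ ≤ τ0) (j : ι) :
    |∫ ω, (Metric.closedBall x τ).indicator (fun z => z j - x j) (X ω) ∂P| ≤
      L / 8 * (2 * τ) ^ (2 + Fintype.card ι) := by
  have hsub : Metric.closedBall x τ ⊆ Metric.closedBall x τ0 :=
    Metric.closedBall_subset_closedBall hττ0
  have hcoord : Continuous fun z : ι → ℝ => z j - x j := by fun_prop
  rw [integral_indicator_comp_eq_setIntegral_smul hX measurableSet_closedBall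
    (hf.mono_set hsub) hcoord.aestronglyMeasurable
    (restrict_eq_withDensity_of_subset hdens measurableSet_closedBall hsub)]
  refine abs_setIntegral_closedBall_mul_eval_sub_le x hL (fun z hz => ?_) hτ j
  exact (abs_max_sub_max_le_abs (f z) (f x) 0).trans (hLip z (hsub hz))

/-- Let `X` be a random vector in `ℝ^D` whose restriction to the ℓ∞-ball
`B(x,τ_0)` has a Lebesgue density `f_X` satisfying `|f_X(z) − f_X(x)| ≤ L‖z − x‖_∞` for all
`z ∈ B(x,τ_0)`. For `0 < τ ≤ τ_0`, define `μ(τ) = E[(X − x) 1_{B(x,τ)}(X)] ∈ ℝ^D`. Then for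
every coordinate `j`: `|μ_j(τ)| ≤ (L/8)(2τ)^{2+D}`.

(The sup metric on `Fin D → ℝ` makes `Metric.closedBall` the ℓ∞-ball.) -/
theorem stmt_17 {Ω : Type*} [MeasurableSpace Ω] (P : Measure Ω) [IsProbabilityMeasure P]
    (D : ℕ) (x : Fin D → ℝ) (X : Ω → Fin D → ℝ) (hX : Measurable X)
    (τ0 L : ℝ) (hτ0 : 0 < τ0) (hL : 0 ≤ L)
    (f : (Fin D → ℝ) → ℝ) (hf : Measurable f)
    (hdens : (Measure.map X P).restrict (Metric.closedBall x τ0) =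
      ((volume : Measure (Fin D → ℝ)).restrict (Metric.closedBall x τ0)).withDensity
        fun z => ENNReal.ofReal (f z))
    (hLip : ∀ z ∈ Metric.closedBall x τ0, |f z - f x| ≤ L * ‖z - x‖)
    (τ : ℝ) (hτpos : 0 < τ) (hττ0 : τ ≤ τ0) (j : Fin D) :
    |∫ ω, Set.indicator (Metric.closedBall x τ) (fun z => z j - x j) (X ω) ∂P| ≤
      L / 8 * (2 * τ) ^ (2 + D) := by
  simpa using stmt_17_general hX.aemeasurable hf.aemeasurable hL hdens hLip hτpos.le hττ0 j
end

section
/- Let X be a random vector in ℝ^D whose restriction to the ℓ∞-ball B(x,τ_0) has a Lebesgue density bounded below by b_f > 0 on B(x,τ_0). Then for any 0 < τ ≤ τ_0, the matrix inequality E[(X − x)(X − x)ᵀ 1_{B(x,τ)}(X)] ⪰ (b_f/12) (2τ)^{2+D} I_D holds in the positive semidefinite order, i.e. for every u ∈ ℝ^D, E[(uᵀ(X − x))² 1_{B(x,τ)}(X)] ≥ (b_f/12)(2τ)^{2+D} ‖u‖₂². -/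
open MeasureTheory

/-!
The law of `X` dominates `b_f` times Lebesgue measure on the cube `B(x, τ)`, so it suffices to
integrate the quadratic form `(uᵀ(z - x))²` over the cube. Lebesgue measure there is a product
measure whose centred coordinates are orthogonal, so only the diagonal terms survive; each equals
`(2τ)^(D-1) * (2τ³/3)`, the cube's volume `(2τ)^D` times the variance `(2τ)²/12` of a uniform
variable on an interval of length `2τ`.
-/

open scoped NNReal ENNReal

section ProductMeasure

variable {ι : Type*} [Fintype ι] {α : ι → Type*} [∀ i, MeasurableSpace (α i)]
  {μ : ∀ i, Measure (α i)}

lemma memLp_comp_eval_pi [∀ i, IsFiniteMeasure (μ i)] {E : Type*} [NormedAddCommGroup E]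
    {p : ℝ≥0∞} {j : ι} {f : α j → E} (hf : MemLp f p (μ j)) :
    MemLp (fun z => f (z j)) p (Measure.pi μ) := by
  classical
  have hmass : ∏ i ∈ Finset.univ.erase j, μ i Set.univ ≠ ∞ :=
    ENNReal.prod_ne_top fun i _ => measure_ne_top (μ i) Set.univ
  have hmap : MemLp f p ((Measure.pi μ).map (Function.eval j)) := by
    rw [Measure.pi_map_eval]
    exact hf.smul_measure hmass
  exact hmap.comp_of_map (measurable_pi_apply j).aemeasurable

lemma integral_comp_eval_pi [DecidableEq ι] [∀ i, SigmaFinite (μ i)] {E : Type*}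
    [NormedAddCommGroup E] [NormedSpace ℝ E] {j : ι} {f : α j → E}
    (hf : AEStronglyMeasurable f (μ j)) :
    ∫ z, f (z j) ∂Measure.pi μ =
      (∏ i ∈ Finset.univ.erase j, (μ i).real Set.univ) • ∫ t, f t ∂μ j := by
  have hmap : AEStronglyMeasurable f ((Measure.pi μ).map (Function.eval j)) := by
    rw [Measure.pi_map_eval]
    exact hf.smul_measure _
  calc ∫ z, f (z j) ∂Measure.pi μ
      = ∫ t, f t ∂(Measure.pi μ).map (Function.eval j) :=
        (integral_map (measurable_pi_apply j).aemeasurable hmap).symm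
    _ = (∏ i ∈ Finset.univ.erase j, (μ i).real Set.univ) • ∫ t, f t ∂μ j := by
        rw [Measure.pi_map_eval, integral_smul_measure, ENNReal.toReal_prod]
        rfl

lemma integral_mul_comp_eval_pi_eq_zero [∀ i, SigmaFinite (μ i)] {𝕜 : Type*} [RCLike 𝕜]
    {j k : ι} (hjk : j ≠ k) {f : α j → 𝕜} (g : α k → 𝕜) (hf : ∫ t, f t ∂μ j = 0) :
    ∫ z, f (z j) * g (z k) ∂Measure.pi μ = 0 := by
  classical
  let F : ∀ i, α i → 𝕜 := Function.update (Function.update (fun _ _ => 1) k g) j f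
  have hFj : F j = f := Function.update_self ..
  have hFk : F k = g := by simp [F, hjk.symm]
  have hprod (z : ∀ i, α i) : f (z j) * g (z k) = ∏ i, F i (z i) := by
    rw [Fintype.prod_eq_mul j k hjk fun i hi => by simp [F, hi.1, hi.2], hFj, hFk]
  simp_rw [hprod]
  rw [integral_fintype_prod_eq_prod]
  exact Finset.prod_eq_zero (Finset.mem_univ j) (hFj ▸ hf)

lemma integral_pi_sq_sum_of_integral_eq_zero [DecidableEq ι] [∀ i, IsFiniteMeasure (μ i)]
    {f : ∀ i, α i → ℝ} (hf : ∀ i, MemLp (f i) 2 (μ i))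
    (hmean : ∀ i, ∫ t, f i t ∂μ i = 0) :
    ∫ z, (∑ i, f i (z i)) ^ 2 ∂Measure.pi μ =
      ∑ i, (∏ k ∈ Finset.univ.erase i, (μ k).real Set.univ) * ∫ t, f i t ^ 2 ∂μ i := by
  have hint (j k : ι) : Integrable (fun z => f j (z j) * f k (z k)) (Measure.pi μ) :=
    (memLp_comp_eval_pi (hf j)).integrable_mul (memLp_comp_eval_pi (hf k))
  have hdiag (j : ι) : ∫ z, f j (z j) * f j (z j) ∂Measure.pi μ =
      (∏ k ∈ Finset.univ.erase j, (μ k).real Set.univ) * ∫ t, f j t ^ 2 ∂μ j := by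
    simp_rw [← pow_two]
    exact integral_comp_eval_pi ((hf j).aestronglyMeasurable.pow 2)
  calc ∫ z, (∑ i, f i (z i)) ^ 2 ∂Measure.pi μ
      = ∫ z, ∑ j, ∑ k, f j (z j) * f k (z k) ∂Measure.pi μ := by
        simp_rw [pow_two, Finset.sum_mul_sum]
    _ = ∑ j, ∑ k, ∫ z, f j (z j) * f k (z k) ∂Measure.pi μ := by
        rw [integral_finsetSum _ fun j _ => integrable_finsetSum _ fun k _ => hint j k]
        exact Finset.sum_congr rfl fun j _ => integral_finsetSum _ fun k _ => hint j k
    _ = ∑ j, ∫ z, f j (z j) * f j (z j) ∂Measure.pi μ :=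
        Finset.sum_congr rfl fun j _ => Fintype.sum_eq_single j fun k hkj =>
          integral_mul_comp_eval_pi_eq_zero hkj.symm (f k) (hmean j)
    _ = _ := Finset.sum_congr rfl fun j _ => hdiag j

end ProductMeasure

section Cube

variable {r : ℝ}

lemma setIntegral_closedBall_comp_sub {E : Type*} [NormedAddCommGroup E] [NormedSpace ℝ E]
    (hr : 0 ≤ r) (c : ℝ) (g : ℝ → E) :
    ∫ t in Metric.closedBall c r, g (t - c) = ∫ s in (-r)..r, g s := by
  rw [Real.closedBall_eq_Icc, integral_Icc_eq_integral_Ioc,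
    ← intervalIntegral.integral_of_le (by linarith), intervalIntegral.integral_comp_sub_right,
    sub_sub_cancel_left, add_sub_cancel_left]

lemma setIntegral_closedBall_sub (hr : 0 ≤ r) (c : ℝ) :
    ∫ t in Metric.closedBall c r, (t - c) = 0 := by
  rw [setIntegral_closedBall_comp_sub hr c fun s => s, integral_id]
  ring

lemma setIntegral_closedBall_sub_sq (hr : 0 ≤ r) (c : ℝ) :
    ∫ t in Metric.closedBall c r, (t - c) ^ 2 = (2 * r) ^ 3 / 12 := by
  rw [setIntegral_closedBall_comp_sub hr c fun s => s ^ 2, integral_pow]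
  push_cast
  ring

lemma setIntegral_closedBall_sq_sum_mul_sub {ι : Type*} [Fintype ι] (hr : 0 ≤ r)
    (x u : ι → ℝ) :
    ∫ z in Metric.closedBall x r, (∑ j, u j * (z j - x j)) ^ 2 =
      (2 * r) ^ (2 + Fintype.card ι) / 12 * ∑ j, u j ^ 2 := by
  classical
  let μ (i : ι) : Measure ℝ := volume.restrict (Metric.closedBall (x i) r)
  have : ∀ i, IsFiniteMeasure (μ i) := fun i =>
    isFiniteMeasure_restrict.2 measure_closedBall_lt_top.ne
  have hL2 (i : ι) : MemLp (fun t => u i * (t - x i)) 2 (μ i) :=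
    (memLp_two_iff_integrable_sq (by fun_prop)).2 <|
      (Continuous.continuousOn (by fun_prop)).integrableOn_compact (isCompact_closedBall (x i) r)
  have hmean (i : ι) : ∫ t, u i * (t - x i) ∂μ i = 0 := by
    rw [integral_const_mul, setIntegral_closedBall_sub hr, mul_zero]
  have hmass (i : ι) : (μ i).real Set.univ = 2 * r := by
    simp [μ, Real.volume_real_closedBall hr]
  rw [closedBall_pi x hr, volume_pi, Measure.restrict_pi_pi,
    integral_pi_sq_sum_of_integral_eq_zero hL2 hmean, Finset.mul_sum]
  refine Finset.sum_congr rfl fun j _ => ?_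
  have hcard : 2 + Fintype.card ι = (Finset.univ.erase j).card + 3 := by
    have := Finset.card_erase_add_one (Finset.mem_univ j)
    rw [Finset.card_univ] at this
    lia
  simp_rw [hmass, Finset.prod_const, mul_pow (u j), integral_const_mul]
  rw [setIntegral_closedBall_sub_sq hr, hcard]
  ring

end Cube

lemma smul_restrict_le_restrict_of_withDensity_le {α : Type*} [MeasurableSpace α]
    {μ ν : Measure α} {s t : Set α} {f : α → ℝ≥0∞} {c : ℝ≥0∞} (hts : t ⊆ s)
    (hdens : (μ.restrict s).withDensity f ≤ ν.restrict s) (hc : ∀ᵐ z ∂μ.restrict s, c ≤ f z) :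
    c • μ.restrict t ≤ ν.restrict t := by
  have hs : c • μ.restrict s ≤ ν.restrict s :=
    calc c • μ.restrict s = (μ.restrict s).withDensity fun _ => c := (withDensity_const c).symm
      _ ≤ (μ.restrict s).withDensity f := withDensity_mono hc
      _ ≤ ν.restrict s := hdens
  have ht := Measure.restrict_mono_measure hs t
  rwa [Measure.restrict_smul, Measure.restrict_restrict_of_subset hts,
    Measure.restrict_restrict_of_subset hts] at ht

theorem stmt_18_general {Ω ι : Type*} [MeasurableSpace Ω] [Fintype ι] {P : Measure Ω}
    {X : Ω → ι → ℝ} (hX : AEMeasurable X P) [IsFiniteMeasureOnCompacts (P.map X)]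
    {x : ι → ℝ} {τ : ℝ} (hτ : 0 ≤ τ) {b : ℝ≥0}
    (hdom : b • volume.restrict (Metric.closedBall x τ) ≤
      (P.map X).restrict (Metric.closedBall x τ)) (u : ι → ℝ) :
    b / 12 * (2 * τ) ^ (2 + Fintype.card ι) * ∑ j, u j ^ 2 ≤
      ∫ ω, Set.indicator (Metric.closedBall x τ)
        (fun z => (∑ j, u j * (z j - x j)) ^ 2) (X ω) ∂P := by
  let B := Metric.closedBall x τ
  let q (z : ι → ℝ) : ℝ := (∑ j, u j * (z j - x j)) ^ 2
  have hq : Continuous q := by fun_prop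
  have hB : MeasurableSet B := measurableSet_closedBall
  have hqB : IntegrableOn q B (P.map X) :=
    hq.continuousOn.integrableOn_compact (isCompact_closedBall x τ)
  calc b / 12 * (2 * τ) ^ (2 + Fintype.card ι) * ∑ j, u j ^ 2
      = b * ∫ z in B, q z := by
        rw [setIntegral_closedBall_sq_sum_mul_sub hτ]
        ring
    _ = ∫ z, q z ∂(b • volume.restrict B) := (integral_smul_nnreal_measure q b).symm
    _ ≤ ∫ z in B, q z ∂P.map X :=
        integral_mono_measure hdom (Filter.Eventually.of_forall fun _ => sq_nonneg _) hqB
    _ = ∫ z, B.indicator q z ∂P.map X := (integral_indicator hB).symm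
    _ = ∫ ω, B.indicator q (X ω) ∂P :=
        integral_map hX (hq.measurable.indicator hB).aestronglyMeasurable

/-- Let `X` be a random vector in `ℝ^D` whose restriction to the ℓ∞-ball
`B(x,τ_0)` has a Lebesgue density bounded below by `b_f > 0` on `B(x,τ_0)`. Then for any
`0 < τ ≤ τ_0`, `E[(X − x)(X − x)ᵀ 1_{B(x,τ)}(X)] ⪰ (b_f/12)(2τ)^{2+D} I_D` in the positive
semidefinite order, i.e. for every `u ∈ ℝ^D`,
`E[(uᵀ(X − x))² 1_{B(x,τ)}(X)] ≥ (b_f/12)(2τ)^{2+D} ‖u‖₂²`. -/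
theorem stmt_18 {Ω : Type*} [MeasurableSpace Ω] (P : Measure Ω) [IsProbabilityMeasure P]
    (D : ℕ) (x : Fin D → ℝ) (X : Ω → Fin D → ℝ) (hX : Measurable X)
    (τ0 b_f : ℝ) (hτ0 : 0 < τ0) (hb : 0 < b_f)
    (f : (Fin D → ℝ) → ℝ) (hf : Measurable f)
    (hdens : (Measure.map X P).restrict (Metric.closedBall x τ0) =
      ((volume : Measure (Fin D → ℝ)).restrict (Metric.closedBall x τ0)).withDensity
        fun z => ENNReal.ofReal (f z))
    (hlb : ∀ z ∈ Metric.closedBall x τ0, b_f ≤ f z)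
    (τ : ℝ) (hτpos : 0 < τ) (hττ0 : τ ≤ τ0) :
    ∀ u : Fin D → ℝ,
      b_f / 12 * (2 * τ) ^ (2 + D) * ∑ j, u j ^ 2 ≤
        ∫ ω, Set.indicator (Metric.closedBall x τ)
          (fun z => (∑ j, u j * (z j - x j)) ^ 2) (X ω) ∂P := by
  intro u
  lift b_f to ℝ≥0 using hb.le
  have hdom : b_f • volume.restrict (Metric.closedBall x τ) ≤
      (P.map X).restrict (Metric.closedBall x τ) :=
    smul_restrict_le_restrict_of_withDensity_le (Metric.closedBall_subset_closedBall hττ0) hdens.ge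
      (ae_restrict_of_forall_mem measurableSet_closedBall fun z hz =>
        ENNReal.ofReal_coe_nnreal ▸ ENNReal.ofReal_le_ofReal (hlb z hz))
  simpa only [Fintype.card_fin] using stmt_18_general hX.aemeasurable hτpos.le hdom u
end
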